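/- arXiv:1312.3735 — 2 statements merged into one kernel-verified Lean document; each statement's English description precedes it below -/
import Mathlib

section
/- Let P and Q be probability mass functions on a finite set 𝒳 and let α > 0 with α ≠ 1. Then Δ_α(P‖Q) = +∞ if and only if either (0 < α < 1 and supp(P) ⊄ supp(Q)) or (α > 1 and supp(P) ∩ supp(Q) = ∅), where supp denotes the support set {x ∈ 𝒳 : P(x) > 0} (respectively for Q). -/
open scoped ENNReal

/-- Sundaresan's divergence `Δ_α(P‖Q)` (base-2 logarithm), valued in `EReal` so as to
accommodate the conventions `0/0 = 0` and `a/0 = +∞` for `a > 0`. -/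
noncomputable def sundaresan {Y : Type*} [Fintype Y] (α : ℝ) (P Q : Y → ℝ) : EReal :=
  let Z : ℝ≥0∞ :=
    ENNReal.ofReal (∑ y, Q y ^ α) *
      (∑ y, ENNReal.ofReal (P y) / ENNReal.ofReal (Q y) ^ (1 - α)) ^ (α / (1 - α)) /
      ENNReal.ofReal (∑ y, P y ^ α) ^ ((1 : ℝ) / (1 - α))
  if Z = ⊤ then ⊤ else ((Real.logb 2 Z.toReal : ℝ) : EReal)

theorem sum_rpow_pos_aux {X : Type*} [Fintype X] (P : X → ℝ) (hP0 : ∀ x, 0 ≤ P x)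
    (hP1 : ∑ x, P x = 1) (α : ℝ) : 0 < ∑ x, P x ^ α := by
  have h : ∃ x, 0 < P x := by
    by_contra! h
    have : ∑ x, P x ≤ 0 := Finset.sum_nonpos (fun x _ => h x)
    linarith
  obtain ⟨x, hx⟩ := h
  exact Finset.sum_pos' (fun y _ => Real.rpow_nonneg (hP0 y) α)
    ⟨x, Finset.mem_univ x, Real.rpow_pos_of_pos hx α⟩

/-- `Δ_α(P‖Q) = ∞` iff (`0 < α < 1` and `supp(P) ⊄ supp(Q)`) or (`α > 1`
and `supp(P) ∩ supp(Q) = ∅`). -/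
theorem sundaresan_eq_top_iff {X : Type*} [Fintype X]
    (P Q : X → ℝ) (hP0 : ∀ x, 0 ≤ P x) (hP1 : ∑ x, P x = 1)
    (hQ0 : ∀ x, 0 ≤ Q x) (hQ1 : ∑ x, Q x = 1)
    (α : ℝ) (hα : 0 < α) (hα1 : α ≠ 1) :
    sundaresan α P Q = ⊤ ↔
      ((α < 1 ∧ ¬ {x : X | 0 < P x} ⊆ {x : X | 0 < Q x}) ∨
        (1 < α ∧ {x : X | 0 < P x} ∩ {x : X | 0 < Q x} = ∅)) := by
  have hA := sum_rpow_pos_aux Q hQ0 hQ1 α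
  have hC := sum_rpow_pos_aux P hP0 hP1 α
  have hA0 : ENNReal.ofReal (∑ y, Q y ^ α) ≠ 0 := by simpa using hA
  have hC0 : ENNReal.ofReal (∑ y, P y ^ α) ≠ 0 := by simpa using hC
  have hD0 : ENNReal.ofReal (∑ y, P y ^ α) ^ ((1 : ℝ) / (1 - α)) ≠ 0 := by
    rw [Ne, ENNReal.rpow_eq_zero_iff]
    simp only [hC0, ENNReal.ofReal_ne_top, false_and, or_self, not_false_eq_true]
  have hDt : ENNReal.ofReal (∑ y, P y ^ α) ^ ((1 : ℝ) / (1 - α)) ≠ ⊤ := by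
    rw [Ne, ENNReal.rpow_eq_top_iff]
    simp only [hC0, ENNReal.ofReal_ne_top, false_and, or_self, not_false_eq_true]
  have key : sundaresan α P Q = ⊤ ↔
      (∑ y, ENNReal.ofReal (P y) / ENNReal.ofReal (Q y) ^ (1 - α)) ^ (α / (1 - α)) = ⊤ := by
    unfold sundaresan
    simp only [ite_eq_left_iff, EReal.coe_ne_top, imp_false, not_not]
    rw [ENNReal.div_eq_top, ENNReal.mul_eq_top]
    simp only [hA0, hD0, hDt, ENNReal.ofReal_ne_top, ne_eq, not_false_eq_true, true_and,
      false_and, and_false, or_false, false_or, and_true]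
  rw [key, ENNReal.rpow_eq_top_iff]
  rcases lt_or_gt_of_ne hα1 with h | h
  · have h1 : 0 < 1 - α := by linarith
    have h2 : 0 < α / (1 - α) := div_pos hα h1
    simp only [h2, h2.not_gt, h, h.not_gt, and_false, false_or, and_true, true_and, false_and,
      or_false, ENNReal.sum_eq_top, ENNReal.div_eq_top, Finset.mem_univ, ENNReal.ofReal_ne_top,
      ENNReal.rpow_eq_zero_iff, h1, h1.not_gt, Set.not_subset, Set.mem_setOf_eq, ne_eq,
      ENNReal.ofReal_eq_zero, not_le, not_lt]
  · have h1 : 1 - α < 0 := by linarith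
    have h2 : α / (1 - α) < 0 := div_neg_of_pos_of_neg hα h1
    simp only [h2, h2.not_gt, h, h.not_gt, and_false, false_or, and_true, true_and, false_and,
      or_false, Finset.sum_eq_zero_iff, ENNReal.div_eq_zero_iff, Finset.mem_univ, 
      ENNReal.rpow_eq_top_iff, ENNReal.ofReal_ne_top, h1, h1.not_gt, ENNReal.ofReal_eq_zero,
      Set.eq_empty_iff_forall_notMem, Set.mem_inter_iff, Set.mem_setOf_eq, not_and_or, not_lt,
      forall_const]
end

section
/- Let P and Q be probability mass functions on a finite set 𝒳, and let 𝒬 = {x ∈ 𝒳 : Q(x) = max_{x'∈𝒳} Q(x')}. Then lim_{α→∞} Δ_α(P‖Q) = log₂( (max_{x∈𝒳} P(x)) / ( (1/|𝒬|) Σ_{x'∈𝒬} P(x') ) ). -/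
open scoped ENNReal
open Filter

lemma sund_term (p q α : ℝ) (hp : 0 ≤ p) (hq : 0 ≤ q) (hα : 1 < α) :
    ENNReal.ofReal p / ENNReal.ofReal q ^ (1 - α) = ENNReal.ofReal (p * q ^ (α - 1)) := by
  rw [ENNReal.ofReal_mul hp, ← ENNReal.ofReal_rpow_of_nonneg hq (by linarith), div_eq_mul_inv,
    ← ENNReal.rpow_neg, neg_sub]

lemma sund_top {X : Type*} [Fintype X] (P Q : X → ℝ) (hP0 : ∀ x, 0 ≤ P x) (hQ0 : ∀ x, 0 ≤ Q x)
    (α : ℝ) (hα : 1 < α) (hA : 0 < ∑ y, Q y ^ α) (hB : 0 < ∑ y, P y ^ α)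
    (hS : ∑ y, P y * Q y ^ (α - 1) = 0) : sundaresan α P Q = ⊤ := by
  unfold sundaresan
  have h1 : (∑ y, ENNReal.ofReal (P y) / ENNReal.ofReal (Q y) ^ (1 - α)) = 0 := by
    simp_rw [fun y => sund_term (P y) (Q y) α (hP0 y) (hQ0 y) hα]
    rw [← ENNReal.ofReal_sum_of_nonneg
      (fun y _ => mul_nonneg (hP0 y) (Real.rpow_nonneg (hQ0 y) _)), hS, ENNReal.ofReal_zero]
  have hneg : α / (1 - α) < 0 := div_neg_of_pos_of_neg (by linarith) (by linarith)
  simp only [h1, ENNReal.zero_rpow_of_neg hneg]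
  rw [ENNReal.mul_top (by simpa using hA), ENNReal.ofReal_rpow_of_pos hB,
    ENNReal.top_div_of_ne_top ENNReal.ofReal_ne_top]
  simp

lemma sund_real {X : Type*} [Fintype X] (P Q : X → ℝ) (hP0 : ∀ x, 0 ≤ P x) (hQ0 : ∀ x, 0 ≤ Q x)
    (α : ℝ) (hα : 1 < α) (hA : 0 < ∑ y, Q y ^ α) (hB : 0 < ∑ y, P y ^ α)
    (hS : 0 < ∑ y, P y * Q y ^ (α - 1)) : sundaresan α P Q =
      ((Real.logb 2 ((∑ y, Q y ^ α) * (∑ y, P y * Q y ^ (α - 1)) ^ (α / (1 - α)) /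
        (∑ y, P y ^ α) ^ (1 / (1 - α))) : ℝ) : EReal) := by
  unfold sundaresan
  have h1 : (∑ y, ENNReal.ofReal (P y) / ENNReal.ofReal (Q y) ^ (1 - α)) =
      ENNReal.ofReal (∑ y, P y * Q y ^ (α - 1)) := by
    simp_rw [fun y => sund_term (P y) (Q y) α (hP0 y) (hQ0 y) hα]
    rw [← ENNReal.ofReal_sum_of_nonneg
      (fun y _ => mul_nonneg (hP0 y) (Real.rpow_nonneg (hQ0 y) _))]
  simp only [h1]
  rw [ENNReal.ofReal_rpow_of_pos hB, ENNReal.ofReal_rpow_of_pos hS, ← ENNReal.ofReal_mul hA.le,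
    ← ENNReal.ofReal_div_of_pos (Real.rpow_pos_of_pos hB _), if_neg ENNReal.ofReal_ne_top,
    ENNReal.toReal_ofReal (by positivity)]

lemma sund_rescale (A S B M m α : ℝ) (hα : 1 < α) (hM : 0 < M) (hm : 0 < m)
    (hS : 0 < S) (hB : 0 < B) :
    (M ^ α * A) * (M ^ (α - 1) * S) ^ (α / (1 - α)) / (m ^ α * B) ^ (1 / (1 - α)) =
      A * S ^ (α / (1 - α)) * m ^ (α / (α - 1)) * B ^ (1 / (α - 1)) := by
  have h1 : (1 - α) ≠ 0 := by linarith
  have h2 : (α - 1) ≠ 0 := by linarith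
  rw [Real.mul_rpow (by positivity) hS.le, Real.mul_rpow (by positivity) hB.le,
    ← Real.rpow_mul hM.le, ← Real.rpow_mul hm.le]
  have e1 : (α - 1) * (α / (1 - α)) = -α := by field_simp; ring
  have e2 : α * (1 / (1 - α)) = -(α / (α - 1)) := by field_simp; ring
  have e3 : 1 / (1 - α) = -(1 / (α - 1)) := by field_simp; ring
  rw [e1, e2, e3, Real.rpow_neg hM.le, Real.rpow_neg hm.le, Real.rpow_neg hB.le]
  have := Real.rpow_pos_of_pos hM α
  have := Real.rpow_pos_of_pos hm (α / (α - 1))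
  have := Real.rpow_pos_of_pos hB (1 / (α - 1))
  field_simp

lemma sund_lim {X : Type*} [Fintype X] (w r : X → ℝ) (h0 : ∀ x, 0 ≤ r x) (h1 : ∀ x, r x ≤ 1) :
    Tendsto (fun α : ℝ => ∑ y, w y * r y ^ α) atTop
      (nhds (∑ y ∈ Finset.univ.filter (fun x => r x = 1), w y)) := by
  rw [Finset.sum_filter]
  refine tendsto_finsetSum _ fun y _ => ?_
  split_ifs with h
  · simp [h]
  · have := tendsto_rpow_atTop_of_base_lt_one (r y) (by linarith [h0 y]) (lt_of_le_of_ne (h1 y) h)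
    simpa using this.const_mul (w y)

lemma sund_factor {X : Type*} [Fintype X] (w q : X → ℝ) (h0 : ∀ x, 0 ≤ q x) (M β : ℝ) (hM : 0 < M) :
    ∑ y, w y * q y ^ β = M ^ β * ∑ y, w y * (q y / M) ^ β := by
  rw [Finset.mul_sum]
  refine Finset.sum_congr rfl fun y _ => ?_
  rw [Real.div_rpow (h0 y) hM.le]
  have := Real.rpow_pos_of_pos hM β
  field_simp

lemma sund_sup_pos {X : Type*} [Fintype X] [Nonempty X] (P : X → ℝ) (hP1 : ∑ x, P x = 1) :
    0 < Finset.univ.sup' Finset.univ_nonempty P := by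
  by_contra h
  push Not at h
  have : ∑ x, P x ≤ 0 := Finset.sum_nonpos fun x hx => (Finset.le_sup' P hx).trans h
  linarith

lemma sund_ge_one {X : Type*} [Fintype X] [Nonempty X] (P : X → ℝ) (hP0 : ∀ x, 0 ≤ P x) (α : ℝ)
    (hm : 0 < Finset.univ.sup' Finset.univ_nonempty P) :
    1 ≤ ∑ y, 1 * (P y / Finset.univ.sup' Finset.univ_nonempty P) ^ α := by
  obtain ⟨x, hx, h⟩ := Finset.exists_mem_eq_sup' Finset.univ_nonempty P
  refine le_trans ?_ (Finset.single_le_sum (f := fun y =>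
    1 * (P y / Finset.univ.sup' Finset.univ_nonempty P) ^ α)
    (fun y _ => mul_nonneg zero_le_one (Real.rpow_nonneg (div_nonneg (hP0 y) hm.le) _)) hx)
  simp only [← h, div_self hm.ne', Real.one_rpow, mul_one, le_refl]

theorem sundaresan_tendsto_atTop {X : Type*} [Fintype X] [Nonempty X]
    (P Q : X → ℝ) (hP0 : ∀ x, 0 ≤ P x) (hP1 : ∑ x, P x = 1)
    (hQ0 : ∀ x, 0 ≤ Q x) (hQ1 : ∑ x, Q x = 1) :
    Filter.Tendsto (fun α : ℝ => sundaresan α P Q) Filter.atTop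
      (nhds
        (let 𝒬 : Finset X :=
          Finset.univ.filter fun x : X => Q x = Finset.univ.sup' Finset.univ_nonempty Q
        if (∑ x ∈ 𝒬, P x) = 0 then (⊤ : EReal)
        else ((Real.logb 2 ((Finset.univ.sup' Finset.univ_nonempty P) /
          ((𝒬.card : ℝ)⁻¹ * ∑ x ∈ 𝒬, P x)) : ℝ) : EReal))) := by
  have hM := sund_sup_pos Q hQ1
  have hm := sund_sup_pos P hP1
  have hA1 := fun α => sund_ge_one Q hQ0 α hM
  have hB1 := fun α => sund_ge_one P hP0 α hm
  have hPm : ∀ x, P x ≤ Finset.univ.sup' Finset.univ_nonempty P :=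
    fun x => Finset.le_sup' P (Finset.mem_univ x)
  have hQM : ∀ x, Q x ≤ Finset.univ.sup' Finset.univ_nonempty Q :=
    fun x => Finset.le_sup' Q (Finset.mem_univ x)
  have hm1 : Finset.univ.sup' Finset.univ_nonempty P ≤ 1 := by
    refine Finset.sup'_le _ _ fun x hx => ?_
    rw [← hP1]
    exact Finset.single_le_sum (fun y _ => hP0 y) hx
  set M := Finset.univ.sup' Finset.univ_nonempty Q with hMdef
  set m := Finset.univ.sup' Finset.univ_nonempty P with hmdef
  clear_value M m
  have hfil : (Finset.univ.filter fun x : X => Q x / M = 1) =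
      Finset.univ.filter fun x : X => Q x = M := by
    ext x; simp [div_eq_one_iff_eq hM.ne']
  have hq0 : ∀ x, 0 ≤ Q x / M := fun x => div_nonneg (hQ0 x) hM.le
  have hq1 : ∀ x, Q x / M ≤ 1 := fun x => (div_le_one hM).2 (hQM x)
  have hp0 : ∀ x, 0 ≤ P x / m := fun x => div_nonneg (hP0 x) hm.le
  have hp1 : ∀ x, P x / m ≤ 1 := fun x => (div_le_one hm).2 (hPm x)
  have tA := sund_lim (fun _ => (1 : ℝ)) (fun x => Q x / M) hq0 hq1
  have tB := sund_lim (fun _ => (1 : ℝ)) (fun x => P x / m) hp0 hp1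
  have tS := (sund_lim P (fun x => Q x / M) hq0 hq1).comp
    (tendsto_atTop_add_const_right atTop (-1 : ℝ) tendsto_id)
  have hfA : ∀ α : ℝ, ∑ y, Q y ^ α = M ^ α * ∑ y, 1 * (Q y / M) ^ α := fun α => by
    simpa using sund_factor (fun _ => (1 : ℝ)) Q hQ0 M α hM
  have hfB : ∀ α : ℝ, ∑ y, P y ^ α = m ^ α * ∑ y, 1 * (P y / m) ^ α := fun α => by
    simpa using sund_factor (fun _ => (1 : ℝ)) P hP0 m α hm
  have hfS : ∀ α : ℝ, ∑ y, P y * Q y ^ (α - 1) = M ^ (α - 1) * ∑ y, P y * (Q y / M) ^ (α - 1) :=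
    fun α => sund_factor P Q hQ0 M (α - 1) hM
  rw [hfil] at tA tS
  have tS' : Tendsto (fun α : ℝ => ∑ y, P y * (Q y / M) ^ (α - 1)) atTop
      (nhds (∑ y ∈ Finset.univ.filter (fun x => Q x = M), P y)) := tS
  clear tS
  have hS0 : ∀ α : ℝ, 0 ≤ ∑ y, P y * (Q y / M) ^ (α - 1) := fun α =>
    Finset.sum_nonneg fun y _ => mul_nonneg (hP0 y) (Real.rpow_nonneg (hq0 y) _)
  set A : ℝ → ℝ := fun α => ∑ y, 1 * (Q y / M) ^ α with hAdef
  set B : ℝ → ℝ := fun α => ∑ y, 1 * (P y / m) ^ α with hBdef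
  set S : ℝ → ℝ := fun α => ∑ y, P y * (Q y / M) ^ (α - 1) with hSdef
  have key1 : ∀ α, 1 < α → S α = 0 → sundaresan α P Q = ⊤ := by
    intro α hα h
    refine sund_top P Q hP0 hQ0 α hα ?_ ?_ ?_
    · rw [hfA]; exact mul_pos (Real.rpow_pos_of_pos hM _) (by linarith [hA1 α])
    · rw [hfB]; exact mul_pos (Real.rpow_pos_of_pos hm _) (by linarith [hB1 α])
    · rw [hfS]; exact mul_eq_zero_of_right _ h
  have key2 : ∀ α, 1 < α → 0 < S α → sundaresan α P Q =
      ((Real.logb 2 (A α * S α ^ (α / (1 - α)) * m ^ (α / (α - 1)) * B α ^ (1 / (α - 1))) : ℝ) :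
        EReal) := by
    intro α hα h
    rw [sund_real P Q hP0 hQ0 α hα, hfA, hfB, hfS]
    · rw [sund_rescale _ _ _ M m α hα hM hm h (by linarith [hB1 α])]
    · rw [hfA]; exact mul_pos (Real.rpow_pos_of_pos hM _) (by linarith [hA1 α])
    · rw [hfB]; exact mul_pos (Real.rpow_pos_of_pos hm _) (by linarith [hB1 α])
    · rw [hfS]; exact mul_pos (Real.rpow_pos_of_pos hM _) h
  replace hA1 : ∀ α, 1 ≤ A α := hA1
  replace hB1 : ∀ α, 1 ≤ B α := hB1
  replace hS0 : ∀ α, 0 ≤ S α := hS0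
  clear_value A B S
  clear hfA hfB hfS
  have hs0 : 0 ≤ ∑ y ∈ Finset.univ.filter (fun x => Q x = M), P y :=
    Finset.sum_nonneg fun y _ => hP0 y
  have hb0 : 1 ≤ ∑ y ∈ Finset.univ.filter (fun x => P x / m = 1), (1 : ℝ) :=
    ge_of_tendsto' tB hB1
  have ha0 : 1 ≤ ∑ y ∈ Finset.univ.filter (fun x => Q x = M), (1 : ℝ) :=
    ge_of_tendsto' tA hA1
  have hcard : ∑ y ∈ Finset.univ.filter (fun x => Q x = M), (1 : ℝ) =
    ((Finset.univ.filter (fun x => Q x = M)).card : ℝ) := by simp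
  rw [hcard] at tA ha0
  simp only []
  set s := ∑ y ∈ Finset.univ.filter (fun x => Q x = M), P y
  set b := ∑ y ∈ Finset.univ.filter (fun x => P x / m = 1), (1 : ℝ)
  set a : ℝ := ((Finset.univ.filter (fun x => Q x = M)).card : ℝ)
  clear_value s b a
  split_ifs with hs
  · rw [EReal.tendsto_nhds_top_iff_real]
    intro c
    rw [hs] at tS'
    have hpos : (0 : ℝ) < m ^ (2 : ℝ) / 2 ^ c := by positivity
    filter_upwards [tS'.eventually (gt_mem_nhds hpos), tS'.eventually (gt_mem_nhds zero_lt_one),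
      eventually_ge_atTop (2 : ℝ)] with α h1 h2 h3
    rcases (hS0 α).eq_or_lt with h | h
    · rw [key1 α (by linarith) h.symm]; exact EReal.coe_lt_top c
    · rw [key2 α (by linarith) h, EReal.coe_lt_coe_iff,
        Real.lt_logb_iff_rpow_lt one_lt_two (by
          have := hA1 α
          have := hB1 α
          positivity)]
      have e1 : (S α)⁻¹ ≤ S α ^ (α / (1 - α)) := by
        rw [← Real.rpow_neg_one]
        apply Real.rpow_le_rpow_of_exponent_ge h h2.le
        rw [div_le_iff_of_neg (by linarith)]; linarith
      have e2 : m ^ (2 : ℝ) ≤ m ^ (α / (α - 1)) := by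
        apply Real.rpow_le_rpow_of_exponent_ge hm hm1
        rw [div_le_iff₀ (by linarith)]; linarith
      have e3 : 1 ≤ B α ^ (1 / (α - 1)) :=
        Real.one_le_rpow (hB1 α) (one_div_nonneg.2 (by linarith))
      have e4 := hA1 α
      calc (2 : ℝ) ^ c < m ^ (2 : ℝ) / S α := by
            rw [lt_div_iff₀ h]; rw [lt_div_iff₀ (by positivity)] at h1; linarith
        _ = 1 * (S α)⁻¹ * m ^ (2 : ℝ) * 1 := by field_simp
        _ ≤ _ := by gcongr
  · have hspos : 0 < s := lt_of_le_of_ne hs0 (Ne.symm hs)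
    have tinv : Tendsto (fun α : ℝ => 1 / (α - 1)) atTop (nhds 0) := by
      simp only [one_div]
      exact tendsto_inv_atTop_zero.comp (tendsto_atTop_add_const_right atTop (-1 : ℝ) tendsto_id)
    have t1 : Tendsto (fun α : ℝ => α / (α - 1)) atTop (nhds 1) := by
      have := tinv.const_add 1
      rw [add_zero] at this
      refine this.congr' ?_
      filter_upwards [eventually_gt_atTop 1] with α hα
      have : α - 1 ≠ 0 := by linarith
      field_simp; ring
    have t2 : Tendsto (fun α : ℝ => α / (1 - α)) atTop (nhds (-1)) := by
      refine t1.neg.congr fun α => ?_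
      rw [← div_neg, neg_sub]
    have hbpos : b ≠ 0 := by linarith
    have T := ((tA.mul (tS'.rpow t2 (Or.inl hs))).mul
      ((tendsto_const_nhds (x := m)).rpow t1 (Or.inl hm.ne'))).mul
      (tB.rpow tinv (Or.inl hbpos))
    have hval : a * s ^ (-1 : ℝ) * m ^ (1 : ℝ) * b ^ (0 : ℝ) = m / (a⁻¹ * s) := by
      rw [Real.rpow_neg_one, Real.rpow_one, Real.rpow_zero]
      have : a ≠ 0 := by linarith
      field_simp
    rw [hval] at T
    have hne : m / (a⁻¹ * s) ≠ 0 := by positivity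
    have T2 : Tendsto _ atTop (nhds (Real.logb 2 (m / (a⁻¹ * s)))) :=
      (Real.continuousAt_logb hne).tendsto.comp T
    refine ((continuous_coe_real_ereal.tendsto _).comp T2).congr' ?_
    filter_upwards [tS'.eventually (lt_mem_nhds hspos), eventually_gt_atTop (1 : ℝ)] with α h1 h2
    rw [key2 α h2 h1]
    rfl
end
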